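/- arXiv:math/0702539 — 2 statements merged into one kernel-verified Lean document; each statement's English description precedes it below -/
import Mathlib

section
/- Let R be a (unital, associative) ring, I ⊆ R a nilpotent two-sided ideal, and let e_1, …, e_r be a complete orthogonal set of idempotents in R. Suppose f_1, …, f_r is another complete orthogonal set of idempotents in R with f_i − e_i ∈ I for every i. Then the element u := Σ_{i=1}^r f_i e_i is a unit of R satisfying u·e_i = f_i·u for all i; consequently f_i = u e_i u⁻¹ for all i, i.e., the two families of idempotents are conjugate by a unit congruent to 1 modulo I. -/
section

variable {R ι : Type*} [Ring R] [Fintype ι] {e f : ι → R}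

lemma OrthogonalIdempotents.sum_mul_mul_self (he : OrthogonalIdempotents e) (f : ι → R) (i : ι) :
    (∑ j, f j * e j) * e i = f i * e i := by
  classical
  simp [Finset.sum_mul, mul_assoc, he.mul_eq]

lemma OrthogonalIdempotents.self_mul_sum_mul (hf : OrthogonalIdempotents f) (e : ι → R) (i : ι) :
    f i * ∑ j, f j * e j = f i * e i := by
  classical
  simp [Finset.mul_sum, ← mul_assoc, hf.mul_eq]

lemma CompleteOrthogonalIdempotents.sum_mul_sub_one_mem (he : CompleteOrthogonalIdempotents e)
    {I : TwoSidedIdeal R} (hfe : ∀ i, f i - e i ∈ I) : ∑ i, f i * e i - 1 ∈ I := by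
  have h : ∑ i, f i * e i - 1 = ∑ i, (f i - e i) * e i := by
    simp only [sub_mul, Finset.sum_sub_distrib, (he.idem _).eq, he.complete]
  rw [h]
  exact sum_mem fun i _ ↦ I.mul_mem_right _ _ (hfe i)

end

/-- **Complete orthogonal sets of idempotents congruent modulo a nilpotent two-sided
ideal are conjugate.**  If `I` is a nilpotent two-sided ideal of a ring `R` and
`e`, `f` are complete orthogonal sets of idempotents with `f i - e i ∈ I` for all `i`,
then `u = ∑ i, f i * e i` is a unit with `u - 1 ∈ I`, `u * e i = f i * u` and
`f i = u * e i * u⁻¹` for all `i`. -/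
theorem stmt_1 (R : Type*) [Ring R] (I : TwoSidedIdeal R)
    (hnil : ∃ n : ℕ, 1 ≤ n ∧ ∀ l : List R, l.length = n → (∀ x ∈ l, x ∈ I) → l.prod = 0)
    (r : ℕ) (e f : Fin r → R)
    (he : CompleteOrthogonalIdempotents e) (hf : CompleteOrthogonalIdempotents f)
    (hcong : ∀ i, f i - e i ∈ I) :
    ∃ u : Rˣ, (u : R) = ∑ i, f i * e i ∧ ((u : R) - 1) ∈ I ∧
      (∀ i, (u : R) * e i = f i * (u : R)) ∧
      (∀ i, f i = (u : R) * e i * ((u⁻¹ : Rˣ) : R)) := by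
  obtain ⟨n, -, hn⟩ := hnil
  have hmem := he.sum_mul_sub_one_mem hcong
  have hnilp : IsNilpotent (∑ i, f i * e i - 1) := by
    refine ⟨n, ?_⟩
    rw [← List.prod_replicate]
    refine hn _ List.length_replicate fun x hx ↦ ?_
    rwa [List.eq_of_mem_replicate hx]
  obtain ⟨u, hu⟩ : IsUnit (∑ i, f i * e i) := by simpa using hnilp.isUnit_add_one
  have hconj : ∀ i, (u : R) * e i = f i * u := fun i ↦ by
    rw [hu, he.sum_mul_mul_self, hf.self_mul_sum_mul]
  refine ⟨u, hu, hu ▸ hmem, hconj, fun i ↦ ?_⟩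
  rw [hconj, Units.mul_inv_cancel_right]
end

section
/- Let B and R be unital associative ℂ-algebras. Suppose B carries a complete orthogonal set of idempotents ε_1, …, ε_r and a two-sided ideal B̄ with B = span_ℂ{ε_1,…,ε_r} ⊕ B̄ as ℂ-vector spaces, and R carries a complete orthogonal set of idempotents e_1, …, e_r and a nilpotent two-sided ideal 𝔪 with R = span_ℂ{e_1,…,e_r} ⊕ 𝔪 as ℂ-vector spaces. Let X be the set of ℂ-algebra homomorphisms f : B → R with f(B̄) ⊆ 𝔪 and f(ε_i) − e_i ∈ 𝔪 for all i, modulo the equivalence relation f ∼ (u f u⁻¹ : b ↦ u·f(b)·u⁻¹) for units u of R; and let Y be the set of ℂ-algebra homomorphisms g : B → R with g(B̄) ⊆ 𝔪 and g(ε_i) = e_i for all i, modulo the equivalence g ∼ v g v⁻¹ for units v of R lying in the subalgebra ⊕_{i=1}^r e_i R e_i. Then the inclusion of the second set of homomorphisms into the first induces a bijection Y → X of quotient sets. -/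
/-- If `p` and `e` are complete orthogonal families of idempotents, then `∑ i, p i * e i`
intertwines `e j` and `p j`. -/
lemma CompleteOrthogonalIdempotents.mul_sum_mul_eq_sum_mul_mul {R ι : Type*} [Ring R] [Fintype ι]
    {p e : ι → R} (hp : CompleteOrthogonalIdempotents p) (he : CompleteOrthogonalIdempotents e)
    (j : ι) : p j * ∑ i, p i * e i = (∑ i, p i * e i) * e j := by
  classical
  have hl : p j * ∑ i, p i * e i = p j * e j := by
    rw [Finset.mul_sum, Finset.sum_eq_single j]
    · rw [← mul_assoc, (hp.idem j).eq]
    · intro i _ hij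
      rw [← mul_assoc, hp.ortho hij.symm, zero_mul]
    · simp
  have hr : (∑ i, p i * e i) * e j = p j * e j := by
    rw [Finset.sum_mul, Finset.sum_eq_single j]
    · rw [mul_assoc, (he.idem j).eq]
    · intro i _ hij
      rw [mul_assoc, he.ortho hij, mul_zero]
    · simp
  rw [hl, hr]

/-- An element commuting with a complete orthogonal family of idempotents is the sum of its
diagonal Peirce components. -/
lemma CompleteOrthogonalIdempotents.eq_sum_mul_mul_of_commute {R ι : Type*} [Ring R] [Fintype ι]
    {e : ι → R} (he : CompleteOrthogonalIdempotents e) {x : R} (hx : ∀ i, Commute (e i) x) :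
    x = ∑ i, e i * x * e i := by
  calc x = x * ∑ i, e i := by rw [he.complete, mul_one]
    _ = ∑ i, e i * x * e i := by
      rw [Finset.mul_sum]
      refine Finset.sum_congr rfl fun i _ => ?_
      rw [(hx i).eq, mul_assoc, (he.idem i).eq]

/-- Conjugation `b ↦ u⁻¹ * f b * u` of an algebra homomorphism by a unit. -/
def AlgHom.conjUnit {k B R : Type*} [CommSemiring k] [Semiring B] [Algebra k B] [Semiring R]
    [Algebra k R] (f : B →ₐ[k] R) (u : Rˣ) : B →ₐ[k] R :=
  AlgHom.ofLinearMap
    ((LinearMap.mulLeft k (↑u⁻¹ : R)) ∘ₗ (LinearMap.mulRight k (u : R)) ∘ₗ f.toLinearMap)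
    (by simp) (by intro x y; simp [mul_assoc])

lemma AlgHom.conjUnit_apply {k B R : Type*} [CommSemiring k] [Semiring B] [Algebra k B]
    [Semiring R] [Algebra k R] (f : B →ₐ[k] R) (u : Rˣ) (b : B) :
    f.conjUnit u b = (↑u⁻¹ : R) * (f b * u) := rfl

/-- **Augmentation-preserving `ℂ`-algebra maps modulo inner automorphisms coincide with
augmented `ℂ^r`-algebra maps modulo inner `ℂ^r`-algebra automorphisms.**

`B` and `R` are augmented `ℂ^r`-algebras (complete orthogonal idempotents `ε`, `e` and
two-sided ideals `Bbar`, `𝔪` complementing their spans), with `𝔪` nilpotent.  Let `X` be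
the set of `ℂ`-algebra maps `f : B → R` with `f Bbar ⊆ 𝔪` and `f (ε i) ≡ e i mod 𝔪`,
modulo conjugation by arbitrary units of `R`, and `Y` the set of such maps with
`g (ε i) = e i`, modulo conjugation by units lying in `⊕ᵢ eᵢ R eᵢ`.  Then the inclusion
induces a bijection `Y → X`: it is surjective (every class in `X` contains a map fixing
the idempotents) and injective (two such maps conjugate by an arbitrary unit are already
conjugate by a unit of `⊕ᵢ eᵢ R eᵢ`). -/
theorem stmt_2 (B R : Type*) [Ring B] [Algebra ℂ B] [Ring R] [Algebra ℂ R]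
    (r : ℕ) (ε : Fin r → B) (e : Fin r → R)
    (hε : CompleteOrthogonalIdempotents ε) (he : CompleteOrthogonalIdempotents e)
    (Bbar : Submodule ℂ B)
    (hBl : ∀ x ∈ Bbar, ∀ y : B, y * x ∈ Bbar) (hBr : ∀ x ∈ Bbar, ∀ y : B, x * y ∈ Bbar)
    (hBcompl : IsCompl (Submodule.span ℂ (Set.range ε)) Bbar)
    (𝔪 : Submodule ℂ R)
    (hml : ∀ x ∈ 𝔪, ∀ y : R, y * x ∈ 𝔪) (hmr : ∀ x ∈ 𝔪, ∀ y : R, x * y ∈ 𝔪)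
    (hnil : ∃ n : ℕ, 1 ≤ n ∧ ∀ l : List R, l.length = n → (∀ x ∈ l, x ∈ 𝔪) → l.prod = 0)
    (hmcompl : IsCompl (Submodule.span ℂ (Set.range e)) 𝔪)
    -- the two classes of homomorphisms
    (Xpred : (B →ₐ[ℂ] R) → Prop)
    (hX : ∀ f, Xpred f ↔ ((∀ b ∈ Bbar, f b ∈ 𝔪) ∧ ∀ i, f (ε i) - e i ∈ 𝔪))
    (Ypred : (B →ₐ[ℂ] R) → Prop)
    (hY : ∀ g, Ypred g ↔ ((∀ b ∈ Bbar, g b ∈ 𝔪) ∧ ∀ i, g (ε i) = e i)) :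
    -- surjectivity on classes
    ((∀ f, Xpred f → ∃ g, Ypred g ∧
        ∃ u : Rˣ, ∀ b, f b = (u : R) * g b * ((u⁻¹ : Rˣ) : R)) ∧
    -- injectivity on classes
      (∀ g g', Ypred g → Ypred g' →
        (∃ u : Rˣ, ∀ b, g' b = (u : R) * g b * ((u⁻¹ : Rˣ) : R)) →
        (∃ v : Rˣ, (v : R) = ∑ i, e i * (v : R) * e i ∧
          ∀ b, g' b = (v : R) * g b * ((v⁻¹ : Rˣ) : R)))) := by
  constructor
  · intro f hf
    obtain ⟨hfB, hfe⟩ := (hX f).1 hf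
    have hp : CompleteOrthogonalIdempotents (fun i => f (ε i)) := hε.map f.toRingHom
    have hmem : (∑ i, f (ε i) * e i) - 1 ∈ 𝔪 := by
      have h : (∑ i, f (ε i) * e i) - 1 = ∑ i, (f (ε i) - e i) * e i := by
        simp only [sub_mul, Finset.sum_sub_distrib, (he.idem _).eq, he.complete]
      rw [h]
      exact Submodule.sum_mem _ fun i _ => hmr _ (hfe i) _
    have hnilp : IsNilpotent ((∑ i, f (ε i) * e i) - 1) := by
      obtain ⟨n, -, hn⟩ := hnil
      refine ⟨n, ?_⟩
      rw [← List.prod_replicate]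
      refine hn _ List.length_replicate fun x hx => ?_
      rwa [List.eq_of_mem_replicate hx]
    obtain ⟨u, hu⟩ : IsUnit (∑ i, f (ε i) * e i) := by
      simpa using hnilp.isUnit_add_one
    refine ⟨f.conjUnit u, (hY _).2 ⟨fun b hb => ?_, fun i => ?_⟩, u, fun b => ?_⟩
    · rw [AlgHom.conjUnit_apply]
      exact hml _ (hmr _ (hfB b hb) _) _
    · rw [AlgHom.conjUnit_apply, hu, hp.mul_sum_mul_eq_sum_mul_mul he i, ← hu,
        Units.inv_mul_cancel_left]
    · rw [AlgHom.conjUnit_apply, Units.mul_inv_cancel_left, Units.mul_inv_cancel_right]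
  · rintro g g' hg hg' ⟨u, hu⟩
    refine ⟨u, he.eq_sum_mul_mul_of_commute fun i => ?_, hu⟩
    have h := hu (ε i)
    rw [((hY g).1 hg).2 i, ((hY g').1 hg').2 i, Units.eq_mul_inv_iff_mul_eq] at h
    exact h
end
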